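/- Let X be a metrizable space and let Y be a subspace of X. If player TWO has a winning strategy in the game G^ω_d(𝒪,𝒪_Y) on X, then Y is contained in a union of countably many closed, strongly zero-dimensional subsets of X. -/

import Mathlib

namespace SSG

/-- A family of subsets of a topological space is *discrete* if every point has a
neighborhood meeting at most one member of the family. -/
def IsDiscreteFam {X : Type*} [TopologicalSpace X] (𝒜 : Set (Set X)) : Prop :=
  ∀ x : X, ∃ U ∈ nhds x, {A | A ∈ 𝒜 ∧ (A ∩ U).Nonempty}.Subsingleton

/-- A family of open subsets covering the whole space. -/
def IsOpenCover {X : Type*} [TopologicalSpace X] (𝒰 : Set (Set X)) : Prop :=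
  (∀ U ∈ 𝒰, IsOpen U) ∧ ⋃₀ 𝒰 = Set.univ

/-- A legal move of TWO in the selective strong screenability game, in response to the
open cover `𝒰` played by ONE: a discrete family of open sets, each contained in some
member of `𝒰`. -/
def LegalTwoMove {X : Type*} [TopologicalSpace X] (𝒰 𝒱 : Set (Set X)) : Prop :=
  IsDiscreteFam 𝒱 ∧ ∀ V ∈ 𝒱, IsOpen V ∧ ∃ U ∈ 𝒰, V ⊆ U

/-- ONE has a winning strategy in the game `G^ω_d(𝒪, 𝒪_Y)` on `X`:
there is a strategy `σ` (a function from finite histories of TWO's moves to open covers)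
such that for every play in which TWO moves legally, the union of TWO's families fails
to cover `Y`. -/
def OneWinsGomega (X : Type*) [TopologicalSpace X] (Y : Set X) : Prop :=
  ∃ σ : List (Set (Set X)) → Set (Set X),
    (∀ h : List (Set (Set X)), IsOpenCover (σ h)) ∧
    ∀ V : ℕ → Set (Set X),
      (∀ n : ℕ, LegalTwoMove (σ (List.ofFn fun i : Fin n => V i)) (V n)) →
      ¬ Y ⊆ ⋃ n : ℕ, ⋃₀ V n

/-- TWO has a winning strategy in the game `G^ω_d(𝒪, 𝒪_Y)` on `X`:
a strategy `τ` (from finite histories of ONE's moves, including the current inning's move,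
to TWO's responses) such that against any sequence of open covers played by ONE, all of
TWO's responses are legal and their union covers `Y`. -/
def TwoWinsGomega (X : Type*) [TopologicalSpace X] (Y : Set X) : Prop :=
  ∃ τ : List (Set (Set X)) → Set (Set X),
    ∀ U : ℕ → Set (Set X), (∀ n : ℕ, IsOpenCover (U n)) →
      (∀ n : ℕ, LegalTwoMove (U n) (τ (List.ofFn fun i : Fin (n+1) => U i))) ∧
      Y ⊆ ⋃ n : ℕ, ⋃₀ τ (List.ofFn fun i : Fin (n+1) => U i)

/-- TWO has a winning strategy in the one-inning game `G^1_d(𝒪, 𝒪_Y)` on `X`: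
every open cover of `X` admits a discrete family of open sets, each contained in some
member of the cover, whose union contains `Y`. -/
def TwoWinsGone (X : Type*) [TopologicalSpace X] (Y : Set X) : Prop :=
  ∀ 𝒰 : Set (Set X), IsOpenCover 𝒰 →
    ∃ 𝒱 : Set (Set X), LegalTwoMove 𝒰 𝒱 ∧ Y ⊆ ⋃₀ 𝒱

/-- ONE has a winning strategy in the Banach–Mazur game `MB(Y,X)`: a strategy `σ`
(from finite histories of TWO's moves to ONE's next move) which always produces a legal
move (a nonempty open set contained in TWO's last move) whenever TWO has moved legally
so far, and such that for every play in which TWO moves legally,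
`Y ∩ ⋂ₙ Oₙ` is nonempty. -/
def OneWinsMB (X : Type*) [TopologicalSpace X] (Y : Set X) : Prop :=
  ∃ σ : List (Set X) → Set X,
    (∀ T : ℕ → Set X, ∀ n : ℕ,
      (∀ k : ℕ, k < n → IsOpen (T k) ∧ (T k).Nonempty ∧
          T k ⊆ σ (List.ofFn fun i : Fin k => T i)) →
      IsOpen (σ (List.ofFn fun i : Fin n => T i)) ∧
      (σ (List.ofFn fun i : Fin n => T i)).Nonempty ∧
      ∀ k : ℕ, n = k + 1 → σ (List.ofFn fun i : Fin n => T i) ⊆ T k) ∧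
    ∀ T : ℕ → Set X,
      (∀ n : ℕ, IsOpen (T n) ∧ (T n).Nonempty ∧
          T n ⊆ σ (List.ofFn fun i : Fin n => T i)) →
      (Y ∩ ⋂ n : ℕ, σ (List.ofFn fun i : Fin n => T i)).Nonempty

/-- TWO has a winning strategy in the Banach–Mazur game `MB(Y,X)`: a strategy `τ`
(from finite histories of ONE's moves to TWO's next move) which always produces a legal
move (a nonempty open subset of ONE's last move) whenever ONE has moved legally
so far, and such that for every play in which ONE moves legally,
`Y ∩ ⋂ₙ Oₙ` is empty. -/
def TwoWinsMB (X : Type*) [TopologicalSpace X] (Y : Set X) : Prop :=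
  ∃ τ : List (Set X) → Set X,
    (∀ O : ℕ → Set X, ∀ n : ℕ,
      (∀ k : ℕ, k ≤ n → IsOpen (O k) ∧ (O k).Nonempty ∧
          ∀ j : ℕ, k = j + 1 → O k ⊆ τ (List.ofFn fun i : Fin (j+1) => O i)) →
      IsOpen (τ (List.ofFn fun i : Fin (n+1) => O i)) ∧
      (τ (List.ofFn fun i : Fin (n+1) => O i)).Nonempty ∧
      τ (List.ofFn fun i : Fin (n+1) => O i) ⊆ O n) ∧
    ∀ O : ℕ → Set X,
      (∀ n : ℕ, IsOpen (O n) ∧ (O n).Nonempty ∧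
          ∀ j : ℕ, n = j + 1 → O n ⊆ τ (List.ofFn fun i : Fin (j+1) => O i)) →
      Y ∩ ⋂ n : ℕ, O n = ∅

/-- A space is ultraparacompact if every open cover has a refinement by pairwise
disjoint open sets still covering the space. -/
def Ultraparacompact (X : Type*) [TopologicalSpace X] : Prop :=
  ∀ 𝒰 : Set (Set X), IsOpenCover 𝒰 →
    ∃ 𝒱 : Set (Set X), (∀ V ∈ 𝒱, IsOpen V ∧ ∃ U ∈ 𝒰, V ⊆ U) ∧
      𝒱.Pairwise Disjoint ∧ ⋃₀ 𝒱 = Set.univ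

/-- A space is zero-dimensional if every point has a neighborhood basis of clopen sets. -/
def ZeroDimensional (X : Type*) [TopologicalSpace X] : Prop :=
  ∀ (x : X) (U : Set X), IsOpen U → x ∈ U → ∃ V : Set X, IsClopen V ∧ x ∈ V ∧ V ⊆ U

/-- A space is strongly zero-dimensional if every *finite* open cover has a refinement
by pairwise disjoint open sets still covering the space. -/
def StronglyZeroDim (X : Type*) [TopologicalSpace X] : Prop :=
  ∀ 𝒰 : Set (Set X), 𝒰.Finite → IsOpenCover 𝒰 →
    ∃ 𝒱 : Set (Set X), (∀ V ∈ 𝒱, IsOpen V ∧ ∃ U ∈ 𝒰, V ⊆ U) ∧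
      𝒱.Pairwise Disjoint ∧ ⋃₀ 𝒱 = Set.univ

/-- `X` has a π-base consisting of nontrivial connected (open) sets. -/
def HasConnectedPiBase (X : Type*) [TopologicalSpace X] : Prop :=
  ∃ P : Set (Set X), (∀ B ∈ P, IsOpen B ∧ IsConnected B ∧ B.Nontrivial) ∧
    ∀ U : Set X, IsOpen U → U.Nonempty → ∃ B ∈ P, B ⊆ U

/-!
Let TWO follow a winning strategy while ONE only plays members of a countable list of open covers
`𝒲 0, 𝒲 1, …`, and let `𝒱 s n` be the reply to `𝒲 n` after the history `s`. If `y ∈ Y` were, for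
every `s`, missed by some `𝒱 s n`, ONE could play these `𝒲 n` and win; hence `y` lies in one of
the countably many sets `⋂ n, ⋃₀ 𝒱 s n`. The closures of the members of a discrete family again
form a discrete family, so on the closed set `⋂ n, closure (⋃₀ 𝒱 s n)` they induce, for each `n`,
a partition into open sets. If the closures of the members of the `𝒲 n` refine the covers of a
development, such as those by balls of radius tending to `0`, then the cells of these partitions
form a basis. Taking around each point the coarsest cell contained in a member of a given open
cover produces a disjoint open refinement.
-/

section

open Set Topology

variable {X : Type*} [TopologicalSpace X] {𝒜 𝒰 : Set (Set X)} {Y : Set X}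

lemma Ultraparacompact.stronglyZeroDim (h : Ultraparacompact X) : StronglyZeroDim X :=
  fun 𝒰 _ h𝒰 ↦ h 𝒰 h𝒰

lemma IsDiscreteFam.image_closure (h : IsDiscreteFam 𝒜) : IsDiscreteFam (closure '' 𝒜) := by
  intro x
  obtain ⟨O, hO, hsub⟩ := h x
  refine ⟨interior O, interior_mem_nhds.2 hO, ?_⟩
  have meets {A : Set X} (hA : (closure A ∩ interior O).Nonempty) : (A ∩ O).Nonempty :=
    ((closure_inter_open_nonempty_iff isOpen_interior).1 hA).mono
      (inter_subset_inter_right A interior_subset)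
  rintro _ ⟨⟨A, hA, rfl⟩, hAO⟩ _ ⟨⟨B, hB, rfl⟩, hBO⟩
  rw [hsub ⟨hA, meets hAO⟩ ⟨hB, meets hBO⟩]

lemma IsDiscreteFam.image_preimage {Z : Type*} [TopologicalSpace Z] (h : IsDiscreteFam 𝒜)
    {f : Z → X} (hf : Continuous f) : IsDiscreteFam ((f ⁻¹' ·) '' 𝒜) := by
  intro z
  obtain ⟨O, hO, hsub⟩ := h (f z)
  refine ⟨f ⁻¹' O, hf.continuousAt hO, ?_⟩
  rintro _ ⟨⟨A, hA, rfl⟩, x, hxA, hxO⟩ _ ⟨⟨B, hB, rfl⟩, y, hyB, hyO⟩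
  rw [hsub ⟨hA, f x, hxA, hxO⟩ ⟨hB, f y, hyB, hyO⟩]

lemma IsDiscreteFam.pairwise_disjoint (h : IsDiscreteFam 𝒜) : 𝒜.Pairwise Disjoint := by
  intro A hA B hB hne
  refine disjoint_left.2 fun x hxA hxB ↦ hne ?_
  obtain ⟨O, hO, hsub⟩ := h x
  exact hsub ⟨hA, x, hxA, mem_of_mem_nhds hO⟩ ⟨hB, x, hxB, mem_of_mem_nhds hO⟩

lemma IsDiscreteFam.isOpenCover (h : IsDiscreteFam 𝒜) (hcover : ⋃₀ 𝒜 = univ) : IsOpenCover 𝒜 := by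
  refine ⟨fun A hA ↦ isOpen_iff_mem_nhds.2 fun x hxA ↦ ?_, hcover⟩
  obtain ⟨O, hO, hsub⟩ := h x
  refine Filter.mem_of_superset hO fun y hyO ↦ ?_
  obtain ⟨B, hB, hyB⟩ := sUnion_eq_univ_iff.1 hcover y
  exact hsub ⟨hA, x, hxA, mem_of_mem_nhds hO⟩ ⟨hB, y, hyB, hyO⟩ ▸ hyB

lemma IsDiscreteFam.locallyFinite (h : IsDiscreteFam 𝒜) : LocallyFinite ((↑) : 𝒜 → Set X) := by
  intro x
  obtain ⟨O, hO, hsub⟩ := h x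
  refine ⟨O, hO, Set.Subsingleton.finite fun A hA B hB ↦ Subtype.ext ?_⟩
  exact hsub ⟨A.2, hA⟩ ⟨B.2, hB⟩

lemma IsDiscreteFam.closure_sUnion (h : IsDiscreteFam 𝒜) :
    closure (⋃₀ 𝒜) = ⋃₀ (closure '' 𝒜) := by
  rw [sUnion_eq_iUnion, h.locallyFinite.closure_iUnion, sUnion_image, biUnion_eq_iUnion]

/-- The discrete quotient of a space whose fibers are the nonempty members of a given partition
into open sets. -/
def IsOpenCover.discreteQuotient (h : IsOpenCover 𝒰) (hdisj : 𝒰.Pairwise Disjoint) :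
    DiscreteQuotient X where
  r x y := ∃ U ∈ 𝒰, x ∈ U ∧ y ∈ U
  iseqv :=
    { refl := fun x ↦
        let ⟨U, hU, hxU⟩ := sUnion_eq_univ_iff.1 h.2 x
        ⟨U, hU, hxU, hxU⟩
      symm := fun ⟨U, hU, hxU, hyU⟩ ↦ ⟨U, hU, hyU, hxU⟩
      trans := fun ⟨U, hU, hxU, hyU⟩ ⟨V, hV, hyV, hzV⟩ ↦
        ⟨U, hU, hxU, hdisj.eq hU hV (not_disjoint_iff.2 ⟨_, hyU, hyV⟩) ▸ hzV⟩ }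
  isOpen_setOfPred_rel x := by
    refine isOpen_iff_mem_nhds.2 fun y ⟨U, hU, hxU, hyU⟩ ↦ ?_
    exact Filter.mem_of_superset ((h.1 U hU).mem_nhds hyU) fun z hzU ↦ ⟨U, hU, hxU, hzU⟩

theorem ultraparacompact_of_antitone {ι : Type*} [LinearOrder ι] [WellFoundedLT ι]
    {S : ι → DiscreteQuotient X} (hS : Antitone S)
    (hbasis : ∀ x, ∀ O ∈ 𝓝 x, ∃ i, {y | (S i).toSetoid x y} ⊆ O) : Ultraparacompact X := by
  intro 𝒰 h𝒰
  let cell (i : ι) (x : X) : Set X := {y | (S i).toSetoid x y}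
  have self_mem_cell (i : ι) (x : X) : x ∈ cell i x := (S i).refl x
  have cell_eq {i : ι} {x y : X} (hy : y ∈ cell i x) : cell i y = cell i x :=
    Set.ext fun z ↦ ⟨(S i).trans x y z hy, (S i).trans y x z ((S i).symm x y hy)⟩
  have cell_anti (x : X) : Antitone (cell · x) := fun i j hij _ hy ↦ hS hij hy
  let good (x : X) : Set ι := {i | ∃ U ∈ 𝒰, cell i x ⊆ U}
  have good_nonempty (x : X) : (good x).Nonempty := by
    obtain ⟨U, hU, hxU⟩ := sUnion_eq_univ_iff.1 h𝒰.2 x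
    obtain ⟨i, hi⟩ := hbasis x U ((h𝒰.1 U hU).mem_nhds hxU)
    exact ⟨i, U, hU, hi⟩
  -- Two of the coarsest good cells `cell (N x) x` that meet are equal, as `N` is constant on each.
  let N (x : X) : ι := wellFounded_lt.min (good x) (good_nonempty x)
  have N_mem (x : X) : N x ∈ good x := wellFounded_lt.min_mem (good x) (good_nonempty x)
  have N_le {i : ι} {x : X} (hi : i ∈ good x) : N x ≤ i := wellFounded_lt.min_le hi
  have mem_good_iff {i : ι} {x y : X} (hy : y ∈ cell i x) : i ∈ good y ↔ i ∈ good x := by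
    simp only [good, mem_ofPred_eq, cell_eq hy]
  have N_eq {x y : X} (hy : y ∈ cell (N x) x) : N y = N x := by
    have hle : N y ≤ N x := N_le ((mem_good_iff hy).2 (N_mem x))
    exact hle.antisymm (N_le ((mem_good_iff (cell_anti x hle hy)).1 (N_mem y)))
  refine ⟨range fun x ↦ cell (N x) x, ?_, ?_, ?_⟩
  · rintro _ ⟨x, rfl⟩
    exact ⟨(S (N x)).isOpen_setOfPred_rel x, N_mem x⟩
  · rintro _ ⟨x, rfl⟩ _ ⟨y, rfl⟩ hne
    refine disjoint_left.2 fun z hzx hzy ↦ hne ?_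
    calc cell (N x) x = cell (N z) z := by rw [N_eq hzx, cell_eq hzx]
      _ = cell (N y) y := by rw [N_eq hzy, cell_eq hzy]
  · exact sUnion_eq_univ_iff.2 fun x ↦ ⟨_, ⟨x, rfl⟩, self_mem_cell _ x⟩

/-- A development of a topological space: a sequence of open covers such that the stars of each
point form a neighborhood basis. The regular Hausdorff spaces with a development are the
Moore spaces. -/
structure IsDevelopment (𝒰 : ℕ → Set (Set X)) : Prop where
  isOpenCover (n : ℕ) : IsOpenCover (𝒰 n)
  exists_forall_subset {x : X} {O : Set X} (hO : O ∈ 𝓝 x) : ∃ n, ∀ U ∈ 𝒰 n, x ∈ U → U ⊆ O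

theorem exists_isDevelopment (X : Type*) [TopologicalSpace X]
    [TopologicalSpace.PseudoMetrizableSpace X] :
    ∃ 𝒰 : ℕ → Set (Set X), IsDevelopment 𝒰 := by
  let := TopologicalSpace.pseudoMetrizableSpacePseudoMetric X
  refine ⟨fun n ↦ range fun c : X ↦ Metric.ball c (1 / ((n : ℝ) + 1)), ⟨fun n ↦ ⟨?_, ?_⟩, ?_⟩⟩
  · rintro _ ⟨c, rfl⟩
    exact Metric.isOpen_ball
  · exact sUnion_eq_univ_iff.2 fun x ↦ ⟨_, ⟨x, rfl⟩, Metric.mem_ball_self (by positivity)⟩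
  · intro x O hO
    obtain ⟨ε, hε, hεO⟩ := Metric.mem_nhds_iff.1 hO
    obtain ⟨n, hn⟩ := exists_nat_one_div_lt (half_pos hε)
    refine ⟨n, ?_⟩
    rintro _ ⟨c, rfl⟩ hx y hy
    refine hεO (Metric.mem_ball.2 ?_)
    calc dist y x ≤ dist y c + dist x c := dist_triangle_right y x c
      _ < ε / 2 + ε / 2 := add_lt_add (hy.trans hn) (hx.trans hn)
      _ = ε := add_halves ε

theorem IsDevelopment.ultraparacompact {𝒰 : ℕ → Set (Set X)} (h : IsDevelopment 𝒰)
    (hdisj : ∀ n, (𝒰 n).Pairwise Disjoint) : Ultraparacompact X := by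
  let S (n : ℕ) : DiscreteQuotient X := (h.isOpenCover n).discreteQuotient (hdisj n)
  have inf_antitone : Antitone fun n ↦ (Finset.range (n + 1)).inf S := fun m n hmn ↦
    Finset.inf_mono (Finset.range_mono (by gcongr))
  refine ultraparacompact_of_antitone inf_antitone fun x O hO ↦ ?_
  obtain ⟨n, hn⟩ := h.exists_forall_subset hO
  refine ⟨n, fun y hy ↦ ?_⟩
  obtain ⟨U, hU, hxU, hyU⟩ : (S n).toSetoid x y :=
    Finset.inf_le (f := S) (Finset.self_mem_range_succ n) hy
  exact hn U hU hxU hyU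

theorem IsDevelopment.ultraparacompact_iInter_closure {𝒰 𝒱 : ℕ → Set (Set X)}
    (h𝒰 : IsDevelopment 𝒰) (h𝒱 : ∀ n, IsDiscreteFam (𝒱 n))
    (hsub : ∀ n, ∀ V ∈ 𝒱 n, ∃ U ∈ 𝒰 n, closure V ⊆ U) :
    Ultraparacompact ↥(⋂ n, closure (⋃₀ 𝒱 n)) := by
  let 𝒲 (n : ℕ) : Set (Set ↥(⋂ n, closure (⋃₀ 𝒱 n))) := ((↑) ⁻¹' ·) '' (closure '' 𝒱 n)
  have h𝒲 (n : ℕ) : IsDiscreteFam (𝒲 n) :=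
    (h𝒱 n).image_closure.image_preimage continuous_subtype_val
  have sUnion_𝒲 (n : ℕ) : ⋃₀ 𝒲 n = univ := by
    refine sUnion_eq_univ_iff.2 fun x ↦ ?_
    obtain ⟨A, hA, hxA⟩ := (h𝒱 n).closure_sUnion ▸ mem_iInter.1 x.2 n
    exact ⟨_, mem_image_of_mem _ hA, hxA⟩
  have isDevelopment_𝒲 : IsDevelopment 𝒲 := by
    refine ⟨fun n ↦ (h𝒲 n).isOpenCover (sUnion_𝒲 n), fun {x O} hO ↦ ?_⟩
    obtain ⟨O', hO', hO'O⟩ := mem_nhds_subtype _ x O |>.1 hO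
    obtain ⟨n, hn⟩ := h𝒰.exists_forall_subset hO'
    refine ⟨n, ?_⟩
    rintro _ ⟨_, ⟨V, hV, rfl⟩, rfl⟩ hxV
    obtain ⟨U, hU, hVU⟩ := hsub n V hV
    exact (preimage_mono (hVU.trans (hn U hU (hVU hxV)))).trans hO'O
  exact isDevelopment_𝒲.ultraparacompact fun n ↦ (h𝒲 n).pairwise_disjoint

theorem IsOpenCover.setOf_closure_subset [RegularSpace X] (h : IsOpenCover 𝒰) :
    IsOpenCover {W | IsOpen W ∧ ∃ U ∈ 𝒰, closure W ⊆ U} := by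
  refine ⟨fun W hW ↦ hW.1, sUnion_eq_univ_iff.2 fun x ↦ ?_⟩
  obtain ⟨U, hU, hxU⟩ := sUnion_eq_univ_iff.1 h.2 x
  obtain ⟨F, hF, hFclosed, hFU⟩ := exists_mem_nhds_isClosed_subset ((h.1 U hU).mem_nhds hxU)
  exact ⟨interior F, ⟨isOpen_interior, U, hU,
    (closure_minimal interior_subset hFclosed).trans hFU⟩, mem_interior_iff_mem_nhds.2 hF⟩

/-- The infinite play produced by the strategy `f`, which chooses each move from the list of
all earlier moves. -/
def strategyPlay {α : Type*} (f : List α → α) (n : ℕ) : α :=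
  f (List.ofFn fun k : Fin n ↦ strategyPlay f k)
decreasing_by exact k.2

lemma ofFn_strategyPlay_succ {α : Type*} (f : List α → α) (n : ℕ) :
    (List.ofFn fun k : Fin (n + 1) ↦ strategyPlay f k) =
      (List.ofFn fun k : Fin n ↦ strategyPlay f k) ++
        [f (List.ofFn fun k : Fin n ↦ strategyPlay f k)] := by
  simp only [List.ofFn_succ_last, Fin.val_castSucc, Fin.val_last]
  rw [strategyPlay]

theorem TwoWinsGomega.exists_responses (h : TwoWinsGomega X Y) {ι : Type*}
    {𝒰 : ι → Set (Set X)} (h𝒰 : ∀ i, IsOpenCover (𝒰 i)) :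
    ∃ 𝒱 : List ι → ι → Set (Set X),
      (∀ s i, LegalTwoMove (𝒰 i) (𝒱 s i)) ∧ Y ⊆ ⋃ s, ⋂ i, ⋃₀ 𝒱 s i := by
  obtain ⟨τ, hτ⟩ := h
  refine ⟨fun s i ↦ τ ((s ++ [i]).map 𝒰), fun s i ↦ ?_, fun y hy ↦ ?_⟩
  · have history : (List.ofFn fun k : Fin (s.length + 1) ↦ 𝒰 ((s ++ [i]).getD k i)) =
        (s ++ [i]).map 𝒰 := by
      refine List.ext_getElem (by simp) fun k _ hk ↦ ?_
      rw [List.length_map] at hk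
      rw [List.getElem_ofFn, List.getElem_map, List.getD_eq_getElem _ _ hk]
    have legal := (hτ (fun k ↦ 𝒰 ((s ++ [i]).getD k i)) fun _ ↦ h𝒰 _).1 s.length
    rw [history] at legal
    simpa using legal
  · by_contra hy_not_mem
    simp only [mem_iUnion, mem_iInter, not_exists, not_forall] at hy_not_mem
    choose f hf using hy_not_mem
    obtain ⟨n, hn⟩ := mem_iUnion.1 ((hτ (𝒰 ∘ strategyPlay f) fun _ ↦ h𝒰 _).2 hy)
    apply hf (List.ofFn fun k : Fin n ↦ strategyPlay f k)
    rw [← ofFn_strategyPlay_succ, List.map_ofFn]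
    exact hn

theorem statement11_general [RegularSpace X] {𝒰 : ℕ → Set (Set X)} (h𝒰 : IsDevelopment 𝒰)
    (h : TwoWinsGomega X Y) :
    ∃ C : ℕ → Set X, (∀ n, IsClosed (C n) ∧ Ultraparacompact ↥(C n)) ∧ Y ⊆ ⋃ n, C n := by
  obtain ⟨𝒱, h𝒱, hY⟩ := h.exists_responses fun n ↦ (h𝒰.isOpenCover n).setOf_closure_subset
  have closure_subset (s : List ℕ) (n : ℕ) (V : Set X) (hV : V ∈ 𝒱 s n) :
      ∃ U ∈ 𝒰 n, closure V ⊆ U := by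
    obtain ⟨-, W, ⟨-, U, hU, hWU⟩, hVW⟩ := (h𝒱 s n).2 V hV
    exact ⟨U, hU, (closure_mono hVW).trans hWU⟩
  let C (s : List ℕ) : Set X := ⋂ n, closure (⋃₀ 𝒱 s n)
  have isClosed_C (s : List ℕ) : IsClosed (C s) := isClosed_iInter fun _ ↦ isClosed_closure
  have ultraparacompact_C (s : List ℕ) : Ultraparacompact ↥(C s) :=
    h𝒰.ultraparacompact_iInter_closure (fun n ↦ (h𝒱 s n).1) (closure_subset s)
  have subset_C : Y ⊆ ⋃ s, C s :=
    hY.trans (iUnion_mono fun s ↦ iInter_mono fun n ↦ subset_closure)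
  obtain ⟨g, hg⟩ := exists_surjective_nat (List ℕ)
  exact ⟨C ∘ g, fun n ↦ ⟨isClosed_C _, ultraparacompact_C _⟩, (hg.iUnion_comp C).symm ▸ subset_C⟩

end

/-- If `X` is metrizable and TWO has a winning strategy in
`G^ω_d(𝒪,𝒪_Y)`, then `Y` is contained in a union of countably many closed, strongly
zero-dimensional subsets of `X`. -/
theorem statement11 {X : Type*} [TopologicalSpace X] [TopologicalSpace.MetrizableSpace X]
    (Y : Set X) (h : TwoWinsGomega X Y) :
    ∃ C : ℕ → Set X, (∀ n, IsClosed (C n) ∧ StronglyZeroDim ↥(C n)) ∧ Y ⊆ ⋃ n, C n := by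
  obtain ⟨𝒰, h𝒰⟩ := exists_isDevelopment X
  obtain ⟨C, hC, hY⟩ := statement11_general h𝒰 h
  exact ⟨C, fun n ↦ ⟨(hC n).1, (hC n).2.stronglyZeroDim⟩, hY⟩

end SSG
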